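/- There is an absolute constant C > 0 such that for every integer n ≥ 1 and every function f holomorphic on the open unit disk 𝔻 whose derivative f' extends continuously to the closed unit disk with |f'(z)| ≤ L for all |z| ≤ 1, there exists a polynomial G of degree at most n with G(0) = f(0) and sup_{|z|=1} |G(z) − f(z)| ≤ C·L/n. -/

import Mathlib

open Metric

/-!
Average `w ↦ f (z * w)` over the unit circle against the weight `‖p w‖ ^ 2`, where `p` is a
polynomial of degree `n`. Split `f` into a polynomial of degree at most `n` plus
`z ^ (n + 1) * h z`: on the circle `w ^ n * conj (p w)` is a polynomial in `w`, so the remainder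
contributes the average of a holomorphic function vanishing at `0`, which is zero by the mean value
property. The average is therefore a polynomial in `z` of degree at most `n`, and since `f` is
`L`-Lipschitz its normalization differs from `f z` by at most `L` times the weighted mean of
`‖w - 1‖`.

The Fejér–Korovkin choice `p = ∑ sin ((k + 1) * θ) * X ^ k` with `θ = π / (n + 2)` makes that mean
at most `θ`: the coefficients form a Dirichlet eigenvector of the discrete Laplacian with eigenvalue
`2 - 2 * cos θ ≤ θ ^ 2`, so by Parseval the weighted mean of `‖w - 1‖ ^ 2` is at most `θ ^ 2`.
-/

section

open Polynomial Real

variable {E : Type*} [NormedAddCommGroup E] [NormedSpace ℂ E]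

theorem norm_circleAverage_le_of_norm_le {F : Type*} [NormedAddCommGroup F] [NormedSpace ℝ F]
    {g : ℂ → F} {b : ℂ → ℝ} {c : ℂ} {R : ℝ} (hb : CircleIntegrable b c R)
    (h : ∀ w ∈ sphere c |R|, ‖g w‖ ≤ b w) : ‖circleAverage g c R‖ ≤ circleAverage b c R := by
  rw [circleAverage, circleAverage, norm_smul, Real.norm_of_nonneg (by positivity), smul_eq_mul]
  gcongr
  exact intervalIntegral.norm_integral_le_of_norm_le (by positivity)
    (.of_forall fun t _ => h _ (circleMap_mem_sphere' c R t)) hb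

theorem circleAverage_smul_const {F : Type*} [NormedAddCommGroup F] [NormedSpace ℝ F]
    [CompleteSpace F] (g : ℂ → ℝ) (a : F) (c : ℂ) (R : ℝ) :
    circleAverage (fun w => g w • a) c R = circleAverage g c R • a := by
  simp only [circleAverage, intervalIntegral.integral_smul_const, smul_assoc]

theorem circleAverage_norm_sq_eval {p : ℂ[X]} {N : ℕ} (hp : p.natDegree < N) :
    circleAverage (fun w => ‖p.eval w‖ ^ 2) 0 1 = ∑ k ∈ Finset.range N, ‖p.coeff k‖ ^ 2 := by
  rw [← sum_sq_norm_coeff_eq_circleAverage]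
  exact p.sum_over_range' (f := fun _ a => ‖a‖ ^ 2) (by simp) N hp

theorem circleAverage_norm_sq_eval_pos {p : ℂ[X]} (hp : p ≠ 0) :
    0 < circleAverage (fun w => ‖p.eval w‖ ^ 2) 0 1 := by
  rw [← sum_sq_norm_coeff_eq_circleAverage]
  refine Finset.sum_pos (fun k hk => ?_) (nonempty_support_iff.2 hp)
  have := norm_pos_iff.2 (mem_support_iff.1 hk)
  positivity

theorem pow_natDegree_mul_conj_eval (p : ℂ[X]) {w : ℂ} (hw : ‖w‖ = 1) :
    w ^ p.natDegree * starRingEnd ℂ (p.eval w) = (p.reverse.map (starRingEnd ℂ)).eval w := by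
  have hw0 : w ≠ 0 := norm_ne_zero_iff.1 (by simp [hw])
  let := invertibleOfNonzero (inv_ne_zero hw0)
  have h := eval₂_reverse_mul_pow (starRingEnd ℂ) w⁻¹ p
  rw [invOf_eq_inv, inv_inv, ← eval_map, Complex.inv_eq_conj hw, eval₂_at_apply,
    ← Complex.inv_eq_conj hw] at h
  rw [← h, mul_left_comm, ← mul_pow, mul_inv_cancel₀ hw0, one_pow, mul_one]

theorem circleAverage_norm_sq_smul_pow_smul_eq_zero [CompleteSpace E] {p : ℂ[X]} {m : ℕ}
    (hm : p.natDegree < m) {F : ℂ → E} (hF : DiffContOnCl ℂ F (ball 0 1)) :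
    circleAverage (fun w => ‖p.eval w‖ ^ 2 • w ^ m • F w) 0 1 = 0 := by
  obtain ⟨k, rfl⟩ := Nat.exists_eq_add_of_lt hm
  set q := X ^ (k + 1) * p.reverse.map (starRingEnd ℂ) * p with hq
  have hcircle : Set.EqOn (fun w => ‖p.eval w‖ ^ 2 • w ^ (p.natDegree + k + 1) • F w)
      (fun w => q.eval w • F w) (sphere 0 |1|) := by
    intro w hw
    have hw : ‖w‖ = 1 := by simpa using hw
    simp only [hq, eval_mul, eval_pow, eval_X, ← pow_natDegree_mul_conj_eval p hw,
      ← Complex.coe_smul, Complex.ofReal_pow, ← Complex.conj_mul', smul_smul]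
    ring_nf
  have hqF : DiffContOnCl ℂ (fun w => q.eval w • F w) (ball 0 |1|) := by
    simpa using q.differentiable.diffContOnCl.smul hF
  rw [circleAverage_congr_sphere hcircle, hqF.circleAverage]
  simp [hq]

theorem exists_eq_polynomial_add_pow_mul {f : ℂ → ℂ} {s : Set ℂ} (hs : s ∈ nhds 0)
    (hf : DifferentiableOn ℂ f s) (n : ℕ) :
    ∃ (q : ℂ[X]) (h : ℂ → ℂ), q.natDegree ≤ n ∧ DifferentiableOn ℂ h s ∧
      ∀ z, f z = q.eval z + z ^ (n + 1) * h z := by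
  have hslope : ∀ (g : ℂ → ℂ) z, g z = g 0 + z * dslope g 0 z := fun g z => by
    simpa using (eq_add_of_sub_eq' (sub_smul_dslope g 0 z).symm)
  induction n generalizing f with
  | zero => exact ⟨C (f 0), dslope f 0, by simp, (Complex.differentiableOn_dslope hs).2 hf,
      fun z => by simpa using hslope f z⟩
  | succ n ih =>
    obtain ⟨q, h, hq, hh, hqh⟩ := ih ((Complex.differentiableOn_dslope hs).2 hf)
    refine ⟨C (f 0) + X * q, h, ?_, hh, fun z => ?_⟩
    · compute_degree
      omega
    · rw [hslope f z, hqh z]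
      simp only [eval_add, eval_C, eval_mul, eval_X]
      ring

theorem circleIntegrable_norm_sq_smul (p : ℂ[X]) {F : ℂ → E} (hF : DiffContOnCl ℂ F (ball 0 1)) :
    CircleIntegrable (fun w => ‖p.eval w‖ ^ 2 • F w) 0 1 := by
  have hp : Continuous fun w => ‖p.eval w‖ ^ 2 := by fun_prop
  exact ContinuousOn.circleIntegrable zero_le_one
    (hp.continuousOn.smul (hF.continuousOn_ball.mono sphere_subset_closedBall))

theorem diffContOnCl_comp_const_mul {f : ℂ → E}
    (hf : DifferentiableOn ℂ f (ball 0 1)) {z : ℂ} (hz : z ∈ ball (0 : ℂ) 1) :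
    DiffContOnCl ℂ (fun w => f (z * w)) (ball 0 1) := by
  refine DifferentiableOn.diffContOnCl (hf.comp (by fun_prop) fun w hw => ?_)
  rw [closure_ball 0 one_ne_zero, mem_closedBall_zero_iff] at hw
  rw [mem_ball_zero_iff] at hz ⊢
  rw [norm_mul]
  exact mul_lt_one_of_nonneg_of_lt_one_left (norm_nonneg z) hz hw

theorem exists_polynomial_eval_eq_circleAverage (p : ℂ[X]) {f : ℂ → ℂ}
    (hf : DifferentiableOn ℂ f (ball 0 1)) :
    ∃ G : ℂ[X], G.natDegree ≤ p.natDegree ∧ ∀ z ∈ ball (0 : ℂ) 1,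
      G.eval z = circleAverage (fun w => ‖p.eval w‖ ^ 2 • f (z * w)) 0 1 := by
  set n := p.natDegree
  obtain ⟨q, h, hq, hh, hqh⟩ :=
    exists_eq_polynomial_add_pow_mul (ball_mem_nhds 0 one_pos) hf n
  let μ : ℕ → ℂ := fun m => circleAverage (fun w => ‖p.eval w‖ ^ 2 • w ^ m) 0 1
  have hpoly (z : ℂ) : circleAverage (fun w => ‖p.eval w‖ ^ 2 • q.eval (z * w)) 0 1 =
      ∑ m ∈ Finset.range (n + 1), q.coeff m * z ^ m * μ m := by
    have hexpand : (fun w => ‖p.eval w‖ ^ 2 • q.eval (z * w)) = fun w =>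
        ∑ m ∈ Finset.range (n + 1), (q.coeff m * z ^ m) • (‖p.eval w‖ ^ 2 • w ^ m) := by
      funext w
      rw [eval_eq_sum_range' (Nat.lt_succ_of_le hq), Finset.smul_sum]
      refine Finset.sum_congr rfl fun m _ => ?_
      simp only [Complex.real_smul, smul_eq_mul]
      ring
    rw [hexpand, circleAverage_fun_sum fun m _ => ContinuousOn.circleIntegrable' (by fun_prop)]
    exact Finset.sum_congr rfl fun m _ => circleAverage_fun_smul
  refine ⟨∑ m ∈ Finset.range (n + 1), C (q.coeff m * μ m) * X ^ m, ?_, fun z hz => ?_⟩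
  · exact natDegree_sum_le_of_forall_le _ _ fun m hm =>
      (natDegree_C_mul_X_pow_le _ _).trans (Finset.mem_range_succ_iff.1 hm)
  · have hhz := diffContOnCl_comp_const_mul hh hz
    have hrem : circleAverage
        (fun w => ‖p.eval w‖ ^ 2 • w ^ (n + 1) • (z ^ (n + 1) * h (z * w))) 0 1 = 0 :=
      circleAverage_norm_sq_smul_pow_smul_eq_zero n.lt_succ_self (hhz.const_smul (z ^ (n + 1)))
    have hsplit : (fun w => ‖p.eval w‖ ^ 2 • f (z * w)) = fun w =>
        ‖p.eval w‖ ^ 2 • q.eval (z * w) +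
          ‖p.eval w‖ ^ 2 • w ^ (n + 1) • (z ^ (n + 1) * h (z * w)) := by
      funext w
      rw [hqh, ← smul_add, mul_pow, smul_eq_mul]
      ring_nf
    rw [hsplit, circleAverage_fun_add, hrem, hpoly, add_zero, eval_finsetSum]
    · refine Finset.sum_congr rfl fun m _ => ?_
      simp only [eval_mul, eval_C, eval_pow, eval_X]
      ring
    · exact ContinuousOn.circleIntegrable' (by fun_prop)
    · exact circleIntegrable_norm_sq_smul p
        ((differentiable_pow (n + 1)).diffContOnCl.smul (hhz.const_smul (z ^ (n + 1))))

theorem norm_circleAverage_norm_sq_smul_sub_le [CompleteSpace E] (p : ℂ[X]) {f : ℂ → E} {L : ℝ}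
    (hf : DifferentiableOn ℂ f (ball 0 1)) (hL : ∀ z ∈ ball (0 : ℂ) 1, ‖deriv f z‖ ≤ L)
    {z : ℂ} (hz : z ∈ ball (0 : ℂ) 1) :
    ‖circleAverage (fun w => ‖p.eval w‖ ^ 2 • f (z * w)) 0 1 -
        circleAverage (fun w => ‖p.eval w‖ ^ 2) 0 1 • f z‖ ≤
      L * circleAverage (fun w => ‖p.eval w‖ ^ 2 * ‖w - 1‖) 0 1 := by
  have hL0 : 0 ≤ L := (norm_nonneg _).trans (hL z hz)
  have hfz := diffContOnCl_comp_const_mul hf hz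
  have hlip : ∀ w ∈ sphere (0 : ℂ) |1|, ‖f (z * w) - f z‖ ≤ L * ‖w - 1‖ := by
    intro w hw
    have hw : ‖w‖ = 1 := by simpa using hw
    have hz1 : ‖z‖ ≤ 1 := (mem_ball_zero_iff.1 hz).le
    have hzw : z * w ∈ ball (0 : ℂ) 1 := by simpa [hw] using hz
    calc ‖f (z * w) - f z‖ ≤ L * ‖z * w - z‖ :=
          (convex_ball 0 1).norm_image_sub_le_of_norm_deriv_le
            (fun x hx => hf.differentiableAt (isOpen_ball.mem_nhds hx)) hL hz hzw
      _ = L * (‖z‖ * ‖w - 1‖) := by rw [← norm_mul, mul_sub, mul_one]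
      _ ≤ L * ‖w - 1‖ := by gcongr; exact mul_le_of_le_one_left (norm_nonneg _) hz1
  rw [← circleAverage_smul_const, ← circleAverage_fun_sub (circleIntegrable_norm_sq_smul p hfz)
    (circleIntegrable_norm_sq_smul p diffContOnCl_const), ← smul_eq_mul, ← circleAverage_fun_smul]
  refine norm_circleAverage_le_of_norm_le (ContinuousOn.circleIntegrable' (by fun_prop))
    fun w hw => ?_
  rw [← smul_sub, norm_smul, Real.norm_of_nonneg (by positivity), smul_eq_mul, mul_left_comm]
  gcongr
  exact hlip w hw

theorem exists_polynomial_norm_eval_sub_le {p : ℂ[X]} (hp : p ≠ 0) {δ : ℝ}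
    (hδ : circleAverage (fun w => ‖p.eval w‖ ^ 2 * ‖w - 1‖) 0 1 ≤
      δ * circleAverage (fun w => ‖p.eval w‖ ^ 2) 0 1)
    {f : ℂ → ℂ} {L : ℝ} (hf : DiffContOnCl ℂ f (ball 0 1))
    (hL : ∀ z ∈ ball (0 : ℂ) 1, ‖deriv f z‖ ≤ L) :
    ∃ G : ℂ[X], G.natDegree ≤ p.natDegree ∧ G.eval 0 = f 0 ∧
      ∀ z ∈ closedBall (0 : ℂ) 1, ‖G.eval z - f z‖ ≤ L * δ := by
  set S := circleAverage (fun w => ‖p.eval w‖ ^ 2) 0 1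
  have hS : 0 < S := circleAverage_norm_sq_eval_pos hp
  have hL0 : 0 ≤ L := (norm_nonneg _).trans (hL 0 (mem_ball_self one_pos))
  obtain ⟨H, hHdeg, hH⟩ := exists_polynomial_eval_eq_circleAverage p hf.differentiableOn
  have heval (z : ℂ) : (S⁻¹ • H).eval z = S⁻¹ • H.eval z := eval_smul ..
  have hball : ∀ z ∈ ball (0 : ℂ) 1, ‖(S⁻¹ • H).eval z - f z‖ ≤ L * δ := by
    intro z hz
    calc ‖(S⁻¹ • H).eval z - f z‖ = S⁻¹ * ‖H.eval z - S • f z‖ := by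
          rw [heval, ← Real.norm_of_nonneg (inv_nonneg.2 hS.le), ← norm_smul, smul_sub,
            inv_smul_smul₀ hS.ne', Real.norm_of_nonneg (inv_nonneg.2 hS.le)]
      _ ≤ S⁻¹ * (L * (δ * S)) := by
          rw [hH z hz]
          gcongr
          exact (norm_circleAverage_norm_sq_smul_sub_le p hf.differentiableOn hL hz).trans
            (by gcongr)
      _ = L * δ := by field_simp
  refine ⟨S⁻¹ • H, (natDegree_smul_le _ _).trans hHdeg, ?_, fun z hz => ?_⟩
  · rw [heval, hH 0 (mem_ball_self one_pos)]
    simp only [zero_mul, circleAverage_smul_const]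
    exact inv_smul_smul₀ hS.ne' _
  · rw [← closure_ball 0 one_ne_zero] at hz
    exact le_on_closure (f := fun z => ‖(S⁻¹ • H).eval z - f z‖) (g := fun _ => L * δ) hball
      ((S⁻¹ • H).continuous.continuousOn.sub hf.continuousOn).norm continuousOn_const hz

/-- The polynomial with coefficients `sin ((k + 1) * π / (n + 2))` for `k ≤ n`. On the unit circle
its squared modulus is, up to normalization, the Fejér–Korovkin kernel of degree `n`, the positive
trigonometric kernel minimizing the mean of `‖w - 1‖ ^ 2`. -/
noncomputable def korovkinPolynomial (n : ℕ) : ℂ[X] :=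
  ∑ k ∈ Finset.range (n + 1), monomial k (sin ((k + 1 : ℕ) * (π / (n + 2))) : ℂ)

theorem natDegree_korovkinPolynomial_le (n : ℕ) : (korovkinPolynomial n).natDegree ≤ n :=
  natDegree_sum_le_of_forall_le _ _ fun _ hk =>
    (natDegree_monomial_le _).trans (Finset.mem_range_succ_iff.1 hk)

theorem sin_natCast_add_two_mul_pi_div (n : ℕ) : sin ((n + 2 : ℕ) * (π / (n + 2))) = 0 := by
  rw [Nat.cast_add, Nat.cast_two, mul_div_cancel₀ _ (by positivity), sin_pi]

theorem coeff_korovkinPolynomial {n k : ℕ} (hk : k ≤ n + 1) :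
    (korovkinPolynomial n).coeff k = (sin ((k + 1 : ℕ) * (π / (n + 2))) : ℝ) := by
  simp only [korovkinPolynomial, finsetSum_coeff, coeff_monomial, Finset.sum_ite_eq',
    Finset.mem_range]
  split_ifs with h
  · rfl
  · obtain rfl : k = n + 1 := by omega
    rw [sin_natCast_add_two_mul_pi_div, Complex.ofReal_zero]

theorem korovkinPolynomial_ne_zero (n : ℕ) : korovkinPolynomial n ≠ 0 := by
  have hθ : sin (π / (n + 2)) ≠ 0 :=
    (sin_pos_of_pos_of_lt_pi (by positivity) (div_lt_self pi_pos (by linarith))).ne'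
  intro h
  have hcoeff := coeff_korovkinPolynomial (Nat.zero_le (n + 1))
  rw [h, coeff_zero, zero_add, Nat.cast_one, one_mul] at hcoeff
  exact hθ (Complex.ofReal_eq_zero.1 hcoeff.symm)

theorem coeff_X_sub_one_mul_korovkinPolynomial {n k : ℕ} (hk : k ≤ n + 1) :
    ((X - 1) * korovkinPolynomial n).coeff k =
      ((sin (k * (π / (n + 2))) - sin ((k + 1 : ℕ) * (π / (n + 2))) : ℝ) : ℂ) := by
  rw [sub_mul, one_mul, coeff_sub, coeff_korovkinPolynomial hk]
  cases k with
  | zero => simp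
  | succ k => rw [coeff_X_mul, coeff_korovkinPolynomial (by omega)]; push_cast; ring

theorem sum_sq_sub_of_recurrence {R : Type*} [CommRing R] {u : ℕ → R} {c : R}
    (hu : ∀ k, u (k + 2) + u k = 2 * c * u (k + 1)) (N : ℕ) :
    ∑ k ∈ Finset.range N, (u (k + 1) - u k) ^ 2 =
      (2 - 2 * c) * ∑ k ∈ Finset.range N, u (k + 1) ^ 2 +
        u N * (u (N + 1) - u N) - u 0 * (u 1 - u 0) := by
  induction N with
  | zero => simp
  | succ N ih =>
    rw [Finset.sum_range_succ, ih, Finset.sum_range_succ]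
    linear_combination -u (N + 1) * hu N

theorem sin_add_two_mul_add_sin_mul (θ : ℝ) (k : ℕ) :
    sin ((k + 2 : ℕ) * θ) + sin (k * θ) = 2 * cos θ * sin ((k + 1 : ℕ) * θ) := by
  rw [show ((k + 2 : ℕ) : ℝ) * θ = (k + 1 : ℕ) * θ + θ by push_cast; ring,
    show (k : ℝ) * θ = (k + 1 : ℕ) * θ - θ by push_cast; ring, sin_add, sin_sub]
  ring

theorem circleAverage_norm_sq_korovkinPolynomial_mul_norm_sub_one_sq (n : ℕ) :
    circleAverage (fun w => ‖(korovkinPolynomial n).eval w‖ ^ 2 * ‖w - 1‖ ^ 2) 0 1 =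
      (2 - 2 * cos (π / (n + 2))) *
        circleAverage (fun w => ‖(korovkinPolynomial n).eval w‖ ^ 2) 0 1 := by
  set θ := π / (n + 2)
  have hdeg := natDegree_korovkinPolynomial_le n
  have hdeg' : ((X - 1) * korovkinPolynomial n).natDegree < n + 2 := by
    have : (X - 1 : ℂ[X]).natDegree ≤ 1 := natDegree_X_sub_C_le 1
    exact natDegree_mul_le.trans_lt (by omega)
  have hmul (w : ℂ) : ‖(korovkinPolynomial n).eval w‖ ^ 2 * ‖w - 1‖ ^ 2 =
      ‖((X - 1) * korovkinPolynomial n).eval w‖ ^ 2 := by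
    simp only [eval_mul, eval_sub, eval_X, eval_one, norm_mul, mul_pow, mul_comm]
  have hsum := sum_sq_sub_of_recurrence (u := fun k => sin (k * θ))
    (sin_add_two_mul_add_sin_mul θ) (n + 2)
  rw [sin_natCast_add_two_mul_pi_div] at hsum
  simp only [hmul, circleAverage_norm_sq_eval hdeg',
    circleAverage_norm_sq_eval (hdeg.trans_lt (by omega : n < n + 2))]
  calc ∑ k ∈ Finset.range (n + 2), ‖((X - 1) * korovkinPolynomial n).coeff k‖ ^ 2
      = ∑ k ∈ Finset.range (n + 2), (sin ((k + 1 : ℕ) * θ) - sin (k * θ)) ^ 2 :=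
        Finset.sum_congr rfl fun k hk => by
          rw [coeff_X_sub_one_mul_korovkinPolynomial (by grind), Complex.norm_real,
            norm_eq_abs, sq_abs, sub_sq_comm]
    _ = (2 - 2 * cos θ) * ∑ k ∈ Finset.range (n + 2), sin ((k + 1 : ℕ) * θ) ^ 2 := by
        simpa using hsum
    _ = _ := by
        congr 1
        refine Finset.sum_congr rfl fun k hk => ?_
        rw [coeff_korovkinPolynomial (by grind), Complex.norm_real, norm_eq_abs, sq_abs]

theorem circleAverage_norm_sq_korovkinPolynomial_mul_norm_sub_one_le (n : ℕ) :
    circleAverage (fun w => ‖(korovkinPolynomial n).eval w‖ ^ 2 * ‖w - 1‖) 0 1 ≤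
      π / (n + 2) * circleAverage (fun w => ‖(korovkinPolynomial n).eval w‖ ^ 2) 0 1 := by
  set θ := π / (n + 2)
  have hθ : 0 < θ := by positivity
  set p := korovkinPolynomial n
  set S := circleAverage (fun w => ‖p.eval w‖ ^ 2) 0 1
  have hS : 0 < S := circleAverage_norm_sq_eval_pos (korovkinPolynomial_ne_zero n)
  have hAMGM (w : ℂ) : (2 * θ) • (‖p.eval w‖ ^ 2 * ‖w - 1‖) ≤
      ‖p.eval w‖ ^ 2 * ‖w - 1‖ ^ 2 + θ ^ 2 • ‖p.eval w‖ ^ 2 := by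
    simp only [smul_eq_mul]
    nlinarith [mul_nonneg (sq_nonneg ‖p.eval w‖) (sq_nonneg (‖w - 1‖ - θ))]
  have hcos : 2 - 2 * cos θ ≤ θ ^ 2 := by linarith [one_sub_sq_div_two_le_cos (x := θ)]
  have hdouble := calc
    2 * θ * circleAverage (fun w => ‖p.eval w‖ ^ 2 * ‖w - 1‖) 0 1
      ≤ circleAverage (fun w => ‖p.eval w‖ ^ 2 * ‖w - 1‖ ^ 2 + θ ^ 2 • ‖p.eval w‖ ^ 2) 0 1 := by
        rw [← smul_eq_mul, ← circleAverage_fun_smul]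
        exact circleAverage_mono (ContinuousOn.circleIntegrable' (by fun_prop))
          (ContinuousOn.circleIntegrable' (by fun_prop)) fun w _ => hAMGM w
    _ = (2 - 2 * cos θ) * S + θ ^ 2 * S := by
        rw [circleAverage_fun_add (ContinuousOn.circleIntegrable' (by fun_prop))
          (ContinuousOn.circleIntegrable' (by fun_prop)), circleAverage_fun_smul,
          circleAverage_norm_sq_korovkinPolynomial_mul_norm_sub_one_sq, smul_eq_mul]
    _ ≤ θ ^ 2 * S + θ ^ 2 * S := by gcongr
    _ = 2 * θ * (θ * S) := by ring
  exact le_of_mul_le_mul_left hdouble (mul_pos two_pos hθ)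

theorem polynomial_approx_vp_general (n : ℕ) {f : ℂ → ℂ} {L : ℝ}
    (hf : DiffContOnCl ℂ f (ball 0 1)) (hL : ∀ z ∈ ball (0 : ℂ) 1, ‖deriv f z‖ ≤ L) :
    ∃ G : ℂ[X], G.natDegree ≤ n ∧ G.eval 0 = f 0 ∧
      ∀ z ∈ closedBall (0 : ℂ) 1, ‖G.eval z - f z‖ ≤ L * (π / (n + 2)) := by
  obtain ⟨G, hdeg, h0, hG⟩ := exists_polynomial_norm_eval_sub_le (korovkinPolynomial_ne_zero n)
    (circleAverage_norm_sq_korovkinPolynomial_mul_norm_sub_one_le n) hf hL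
  exact ⟨G, hdeg.trans (natDegree_korovkinPolynomial_le n), h0, hG⟩

end

/-- There is an absolute constant `C > 0` such that whenever `f` is holomorphic on the
open unit disk, continuous on the closed disk, and its derivative extends continuously
to the closed disk with bound `L`, there is a polynomial `G` of degree at most `n` with
`G(0) = f(0)` and `sup_{|z|=1} |G(z) - f(z)| ≤ C L / n`. -/
theorem polynomial_approx_vp :
    ∃ C > (0 : ℝ), ∀ n : ℕ, 1 ≤ n → ∀ (f : ℂ → ℂ) (L : ℝ),
      DifferentiableOn ℂ f (ball (0 : ℂ) 1) →
      ContinuousOn f (closedBall (0 : ℂ) 1) →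
      (∃ g : ℂ → ℂ, ContinuousOn g (closedBall (0 : ℂ) 1) ∧
        (∀ z ∈ ball (0 : ℂ) 1, g z = deriv f z) ∧
        (∀ z ∈ closedBall (0 : ℂ) 1, ‖g z‖ ≤ L)) →
      ∃ G : Polynomial ℂ, G.natDegree ≤ n ∧ G.eval 0 = f 0 ∧
        ∀ z : ℂ, ‖z‖ = 1 → ‖G.eval z - f z‖ ≤ C * L / n := by
  refine ⟨Real.pi, Real.pi_pos, fun n hn f L hf hfc ⟨g, _, hgf, hgL⟩ => ?_⟩
  have hL : 0 ≤ L := (norm_nonneg _).trans (hgL 0 (mem_closedBall_self zero_le_one))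
  obtain ⟨G, hdeg, h0, hG⟩ := polynomial_approx_vp_general n
    ⟨hf, by rwa [closure_ball 0 one_ne_zero]⟩
    fun z hz => hgf z hz ▸ hgL z (ball_subset_closedBall hz)
  refine ⟨G, hdeg, h0, fun z hz => (hG z (by simp [hz])).trans ?_⟩
  rw [mul_div_assoc', mul_comm L]
  gcongr
  linarith
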